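/- Let {a_α : α < ω₁} and {b_α : α < ω₁} be almost disjoint families of infinite subsets of ℕ, and for each α < ω₁ let 𝒲_α and 𝒱_α be free ultrafilters on ℕ with a_α ∈ 𝒲_α and b_α ∈ 𝒱_α. Suppose that for each γ < ω₁ the set S_γ = {α < ω₁ : a_γ ∈ 𝒱_α or b_γ ∈ 𝒲_α} is countable. Then there exist an uncountable set Λ ⊆ ω₁ and, for each α ∈ Λ, sets a′_α ⊆ a_α with a′_α ∈ 𝒲_α and b′_α ⊆ b_α with b′_α ∈ 𝒱_α, such that {a′_α ∪ b′_α : α ∈ Λ} is an almost disjoint family. -/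

import Mathlib

/-!
Two countable families of sets whose cross intersections are all finite can be separated by a single
set up to finite errors. Hence, given countably many members of an almost disjoint family, an
ultrafilter `U` and two disjoint subfamilies of these, some set in `U` has finite intersection with
every member of one of the two subfamilies.

Well-order the index set and colour it with natural numbers by recursion. At an index `α` with only
countably many predecessors, all colours but at most one are good for `V α` and the family `a`, in
the sense that some set in `V α` has finite intersection with `a β` for every earlier `β` of that
colour; the same holds for `W α` and `b`. So some colour is good for both, and `α` receives it.
Uncountably many indices have countably many predecessors, so one colour is used uncountably often
among them; intersecting `a α` and `b α` with the witnessing sets makes the unions almost disjoint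
along that colour.
-/

open Set Filter

section Separation

variable {X ι κ : Type*}

theorem exists_finite_diff_and_finite_inter [Countable ι] [Countable κ] {c : ι → Set X}
    {d : κ → Set X} (h : ∀ i j, (c i ∩ d j).Finite) :
    ∃ s : Set X, (∀ i, (c i \ s).Finite) ∧ ∀ j, (d j ∩ s).Finite := by
  obtain ⟨e, he⟩ := exists_injective_nat ι
  obtain ⟨g, hg⟩ := exists_injective_nat κ
  -- From `c i` remove the finitely many `d j` enumerated no later than `c i`.
  refine ⟨⋃ i, c i \ ⋃ j ∈ {j | g j ≤ e i}, d j, fun i => ?_, fun j => ?_⟩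
  · have earlier : {j | g j ≤ e i}.Finite := (finite_Iic (e i)).preimage hg.injOn
    refine (earlier.biUnion fun j _ => h i j).subset ?_
    rintro x ⟨hxi, hxs⟩
    by_contra hx
    refine hxs (mem_iUnion.2 ⟨i, hxi, fun hxd => hx ?_⟩)
    rw [← inter_iUnion₂]
    exact ⟨hxi, hxd⟩
  · have earlier : {i | e i < g j}.Finite := (finite_Iio (g j)).preimage he.injOn
    refine (earlier.biUnion fun i _ => h i j).subset ?_
    rintro x ⟨hxj, hxs⟩
    obtain ⟨i, hxi, hxd⟩ := mem_iUnion.1 hxs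
    have hij : e i < g j := not_le.1 fun hle => hxd (mem_biUnion hle hxj)
    exact mem_biUnion hij ⟨hxi, hxj⟩

end Separation

section AlmostAvoids

variable {X ι K : Type*} {a b : ι → Set X} {C D S : Set ι}

/-- The filter `F` almost avoids the subfamily of `a` indexed by `C`: a single set in `F` has finite
intersection with every `a β`, `β ∈ C`. -/
def AlmostAvoids (F : Filter X) (a : ι → Set X) (C : Set ι) : Prop :=
  ∃ s ∈ F, ∀ β ∈ C, (a β ∩ s).Finite

theorem almostAvoids_or_almostAvoids (U : Ultrafilter X) (hC : C.Countable) (hD : D.Countable)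
    (h : ∀ β ∈ C, ∀ γ ∈ D, (a β ∩ a γ).Finite) :
    AlmostAvoids U a C ∨ AlmostAvoids U a D := by
  have := hC.to_subtype
  have := hD.to_subtype
  obtain ⟨s, hCs, hDs⟩ := exists_finite_diff_and_finite_inter
    (c := fun β : C => a β) (d := fun γ : D => a γ) fun β γ => h β β.2 γ γ.2
  rcases U.mem_or_compl_mem s with hs | hs
  · exact Or.inr ⟨s, hs, fun γ hγ => hDs ⟨γ, hγ⟩⟩
  · exact Or.inl ⟨sᶜ, hs, fun β hβ => hCs ⟨β, hβ⟩⟩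

theorem subsingleton_setOf_not_almostAvoids_fiber (U : Ultrafilter X)
    (ha : Pairwise fun α β => (a α ∩ a β).Finite) (hS : S.Countable) (f : ι → K) :
    {k | ¬AlmostAvoids U a (S ∩ f ⁻¹' {k})}.Subsingleton := by
  intro k hk l hl
  by_contra hkl
  refine (almostAvoids_or_almostAvoids U (hS.mono inter_subset_left) (hS.mono inter_subset_left)
    ?_).elim hk hl
  rintro β ⟨-, rfl⟩ γ ⟨-, rfl⟩
  exact ha fun hβγ => hkl (congrArg f hβγ)

theorem exists_almostAvoids_fiber_and [Infinite K] (U U' : Ultrafilter X)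
    (ha : Pairwise fun α β => (a α ∩ a β).Finite)
    (hb : Pairwise fun α β => (b α ∩ b β).Finite) (hS : S.Countable) (f : ι → K) :
    ∃ k, AlmostAvoids U a (S ∩ f ⁻¹' {k}) ∧ AlmostAvoids U' b (S ∩ f ⁻¹' {k}) := by
  have finite_bad := (subsingleton_setOf_not_almostAvoids_fiber U ha hS f).finite.union
    (subsingleton_setOf_not_almostAvoids_fiber U' hb hS f).finite
  obtain ⟨k, hk⟩ := finite_bad.exists_notMem
  exact ⟨k, by_contra fun h => hk (Or.inl h), by_contra fun h => hk (Or.inr h)⟩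

end AlmostAvoids

section WellOrder

variable {ι K : Type*} [Preorder ι] [WellFoundedLT ι]

theorem exists_coloring_of_forall_exists_color [Nonempty K] {P : ι → Set ι → Prop}
    (h : ∀ α (f : ι → K), ∃ k, P α (Iio α ∩ f ⁻¹' {k})) :
    ∃ f : ι → K, ∀ α, P α (Iio α ∩ f ⁻¹' {f α}) := by
  classical
  choose color hcolor using h
  let extend (α : ι) (g : ∀ β, β < α → K) (β : ι) : K :=
    if hβ : β < α then g β hβ else Classical.arbitrary K
  let f : ι → K := WellFoundedLT.fix fun α g => color α (extend α g)
  refine ⟨f, fun α => ?_⟩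
  let g : ι → K := extend α fun β _ => f β
  have hfα : f α = color α g := WellFoundedLT.fix_eq _ α
  have hgf : EqOn g f (Iio α) := fun _ hβ => dif_pos hβ
  rw [hfα, ← hgf.inter_preimage_eq]
  exact hcolor α g

theorem not_countable_setOf_countable_Iio [Uncountable ι] :
    ¬{α : ι | (Iio α).Countable}.Countable := by
  intro hT
  have hne : {α : ι | (Iio α).Countable}ᶜ.Nonempty :=
    nonempty_compl.2 fun huniv => not_countable_univ (huniv ▸ hT)
  obtain ⟨α, hα, hmin⟩ := wellFounded_lt.has_min _ hne
  exact hα (hT.mono fun β hβ => by_contra fun hβT => hmin β hβT hβ)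

end WellOrder

theorem exists_not_countable_inter_fiber {ι K : Type*} [Countable K] {T : Set ι}
    (hT : ¬T.Countable) (f : ι → K) : ∃ k, ¬(T ∩ f ⁻¹' {k}).Countable := by
  by_contra! h
  apply hT
  have hcover : T = ⋃ k, T ∩ f ⁻¹' {k} := by
    rw [← inter_iUnion, ← preimage_iUnion, iUnion_of_singleton, preimage_univ, inter_univ]
  exact hcover ▸ countable_iUnion h

section Refinement

variable {ι X : Type*} {a b : ι → Set X}

theorem exists_coloring_almostAvoids [Preorder ι] [WellFoundedLT ι]
    (ha : Pairwise fun α β => (a α ∩ a β).Finite)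
    (hb : Pairwise fun α β => (b α ∩ b β).Finite) (W V : ι → Ultrafilter X) :
    ∃ f : ι → ℕ, ∀ α, (Iio α).Countable →
      AlmostAvoids (V α) a (Iio α ∩ f ⁻¹' {f α}) ∧
      AlmostAvoids (W α) b (Iio α ∩ f ⁻¹' {f α}) := by
  refine exists_coloring_of_forall_exists_color (K := ℕ)
    (P := fun α C => (Iio α).Countable → AlmostAvoids (V α) a C ∧ AlmostAvoids (W α) b C)
    fun α f => ?_
  by_cases hα : (Iio α).Countable
  · obtain ⟨k, hk⟩ := exists_almostAvoids_fiber_and (V α) (W α) ha hb hα f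
    exact ⟨k, fun _ => hk⟩
  · exact ⟨0, fun hα' => absurd hα' hα⟩

theorem finite_union_inter_union {p q p' q' : Set X} (hp : (p ∩ p').Finite)
    (hq : (q ∩ q').Finite) (hpq : (p ∩ q').Finite) (hqp : (q ∩ p').Finite) :
    ((p ∪ q) ∩ (p' ∪ q')).Finite := by
  rw [union_inter_distrib_right, inter_union_distrib_left, inter_union_distrib_left]
  exact (hp.union hpq).union (hqp.union hq)

theorem almost_disjoint_union_family_general [Uncountable ι]
    (ha : Pairwise fun α β => (a α ∩ a β).Finite)
    (hb : Pairwise fun α β => (b α ∩ b β).Finite) (W V : ι → Ultrafilter X)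
    (haW : ∀ α, a α ∈ W α) (hbV : ∀ α, b α ∈ V α) :
    ∃ Λ : Set ι, ¬Λ.Countable ∧
      ∃ a' b' : ι → Set X,
        (∀ α ∈ Λ, a' α ⊆ a α ∧ a' α ∈ W α ∧ b' α ⊆ b α ∧ b' α ∈ V α) ∧
        (∀ α ∈ Λ, ∀ β ∈ Λ, α ≠ β →
          ((a' α ∪ b' α) ∩ (a' β ∪ b' β)).Finite) := by
  obtain ⟨_, _⟩ := exists_wellFoundedLT ι
  obtain ⟨f, hf⟩ := exists_coloring_almostAvoids ha hb W V
  obtain ⟨k, hk⟩ := exists_not_countable_inter_fiber not_countable_setOf_countable_Iio f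
  choose! hV hW using hf
  choose! B hBV haB using hV
  choose! A hAW hbA using hW
  refine ⟨_, hk, fun α => a α ∩ A α, fun α => b α ∩ B α, ?_, ?_⟩
  · rintro α ⟨hα, -⟩
    exact ⟨inter_subset_left, inter_mem (haW α) (hAW α hα),
      inter_subset_left, inter_mem (hbV α) (hBV α hα)⟩
  · rintro α ⟨hα, hαk⟩ β ⟨hβ, hβk⟩ hne
    wlog hlt : α < β generalizing α β
    · rw [inter_comm]
      exact this β hβ hβk α hα hαk hne.symm (hne.lt_or_gt.resolve_left hlt)
    have hmem : α ∈ Iio β ∩ f ⁻¹' {f β} := ⟨hlt, hαk.trans hβk.symm⟩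
    apply finite_union_inter_union
    · exact (ha hne).subset (inter_subset_inter inter_subset_left inter_subset_left)
    · exact (hb hne).subset (inter_subset_inter inter_subset_left inter_subset_left)
    · exact (haB β hβ α hmem).subset (inter_subset_inter inter_subset_left inter_subset_right)
    · exact (hbA β hβ α hmem).subset (inter_subset_inter inter_subset_left inter_subset_right)

end Refinement

/-- Let `{a α}` and `{b α}` be almost disjoint families of infinite subsets of ℕ
indexed by ω₁ (here: by a type `ι` of cardinality ℵ₁), and for each `α` let
`𝒲 α` and `𝒱 α` be free ultrafilters with `a α ∈ 𝒲 α` and `b α ∈ 𝒱 α`.  If for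
each `γ` the set `S γ = {α : a γ ∈ 𝒱 α or b γ ∈ 𝒲 α}` is countable, then there
are an uncountable `Λ ⊆ ι` and, for each `α ∈ Λ`, sets `a' α ⊆ a α` with
`a' α ∈ 𝒲 α` and `b' α ⊆ b α` with `b' α ∈ 𝒱 α`, such that
`{a' α ∪ b' α : α ∈ Λ}` is an almost disjoint family. -/
theorem almost_disjoint_union_family (ι : Type) (hι : Cardinal.mk ι = Cardinal.aleph 1)
    (a b : ι → Set ℕ)
    (ha_inf : ∀ α, (a α).Infinite) (hb_inf : ∀ α, (b α).Infinite)
    (ha_ad : ∀ α β, α ≠ β → (a α ∩ a β).Finite)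
    (hb_ad : ∀ α β, α ≠ β → (b α ∩ b β).Finite)
    (W V : ι → Ultrafilter ℕ)
    (hW_free : ∀ α, ∀ s : Set ℕ, s.Finite → s ∉ W α)
    (hV_free : ∀ α, ∀ s : Set ℕ, s.Finite → s ∉ V α)
    (haW : ∀ α, a α ∈ W α) (hbV : ∀ α, b α ∈ V α)
    (hS : ∀ γ, {α : ι | a γ ∈ V α ∨ b γ ∈ W α}.Countable) :
    ∃ Λ : Set ι, ¬Λ.Countable ∧
      ∃ a' b' : ι → Set ℕ,
        (∀ α ∈ Λ, a' α ⊆ a α ∧ a' α ∈ W α ∧ b' α ⊆ b α ∧ b' α ∈ V α) ∧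
        (∀ α ∈ Λ, ∀ β ∈ Λ, α ≠ β →
          ((a' α ∪ b' α) ∩ (a' β ∪ b' β)).Finite) := by
  have : Uncountable ι := Cardinal.aleph0_lt_mk_iff.1 (hι ▸ Cardinal.aleph0_lt_aleph_one)
  exact almost_disjoint_union_family_general ha_ad hb_ad W V haW hbV
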